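/- arXiv:1409.3702 — 3 statements merged into one kernel-verified Lean document; each statement's English description precedes it below -/
import Mathlib

section
/- Let D ∈ ]0,1[ and let (aₙ)_{n≥2} be a sequence of non-negative integers such that Σ_{n≥2} aₙ Dⁿ < 1 − D. Then there is a sequence (bₙ)_{n≥1} of non-negative integers such that: (i) b₁ = 1; (ii) bₙ ≥ aₙ for all n ≥ 2; (iii) bₙ − aₙ ≥ 2 for infinitely many n; (iv) limsup_n (bₙ)^{1/n} = D^{−1}; and (v) Σ_{n≥1} bₙ Dⁿ = 1. -/
open scoped ENNReal NNReal Classical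
open Filter MeasureTheory

/-- A countable directed graph: countable sets of vertices and edges with
source and range maps. -/
structure DirGraph where
  V : Type
  E : Type
  countV : Countable V
  countE : Countable E
  s : E → V
  r : E → V

namespace DirGraph

attribute [instance] countV countE

variable (G : DirGraph)

/-- `μ` is a finite path (a vertex counts as the empty path). -/
def IsPath (μ : List G.E) : Prop := μ.Chain' (fun e f => G.r e = G.s f)

/-- `μ` is a finite path from `u` to `w`. -/
def IsPathFrom (μ : List G.E) (u w : G.V) : Prop :=
  G.IsPath μ ∧ (∀ e ∈ μ.head?, G.s e = u) ∧ (∀ e ∈ μ.getLast?, G.r e = w) ∧ (μ = [] → u = w)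

/-- A function `F : E → ℝ` extended to finite paths. -/
def Fsum (F : G.E → ℝ) (μ : List G.E) : ℝ := (μ.map F).sum

/-- The matrix `A(β)` over the vertices, with entries in `[0,∞]`:
`A(β)_{uw} = Σ_{e : u → w} e^{-β F(e)}`. -/
noncomputable def Amat (F : G.E → ℝ) (β : ℝ) (u w : G.V) : ℝ≥0∞ :=
  ∑' e : {e : G.E // G.s e = u ∧ G.r e = w}, ENNReal.ofReal (Real.exp (-β * F e.1))

/-- The powers of the matrix `A(β)`, defined recursively; `A(β)⁰` is the identity matrix. -/
noncomputable def Apow (F : G.E → ℝ) (β : ℝ) : ℕ → G.V → G.V → ℝ≥0∞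
  | 0, u, w => if u = w then 1 else 0
  | n + 1, u, w => ∑' x : G.V, G.Amat F β u x * Apow F β n x w

/-- A sink is a vertex emitting no edges. -/
def IsSink (v : G.V) : Prop := ∀ e : G.E, G.s e ≠ v

/-- An infinite emitter is a vertex emitting infinitely many edges. -/
def InfEmitter (v : G.V) : Prop := {e : G.E | G.s e = v}.Infinite

/-- A set of vertices is hereditary when it is closed under following edges. -/
def Hereditary (H : Set G.V) : Prop := ∀ e : G.E, G.s e ∈ H → G.r e ∈ H

/-- A set of vertices `H` is saturated when every vertex of `V ∖ V∞` all of whose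
successors lie in `H` belongs to `H`. -/
def Saturated (H : Set G.V) : Prop :=
  ∀ v : G.V, ¬ G.IsSink v → ¬ G.InfEmitter v → (∀ e : G.E, G.s e = v → G.r e ∈ H) → v ∈ H

/-- `G` is cofinal when the only nonempty hereditary and saturated set of
vertices is the whole vertex set. -/
def Cofinal : Prop :=
  ∀ H : Set G.V, H.Nonempty → G.Hereditary H → G.Saturated H → H = Set.univ

/-- The set of non-wandering vertices: those lying on a loop of length ≥ 1. -/
def NW : Set G.V := {v | ∃ μ : List G.E, μ ≠ [] ∧ G.IsPathFrom μ v v}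

/-- `G` is strongly connected when there is a finite path between any two vertices. -/
def StronglyConnected : Prop := ∀ u w : G.V, ∃ μ : List G.E, G.IsPathFrom μ u w

/-- `G` is row-finite when every vertex emits only finitely many edges. -/
def RowFinite : Prop := ∀ v : G.V, {e : G.E | G.s e = v}.Finite

/-- `ψ` is an `A(β)`-harmonic vector. -/
def Harmonic (F : G.E → ℝ) (β : ℝ) (ψ : G.V → ℝ≥0) : Prop :=
  ∀ v : G.V, ∑' w : G.V, G.Amat F β v w * ψ w = (ψ v : ℝ≥0∞)

/-- `A(β)` is transient when `Σ_n A(β)ⁿ_{vv} < ∞` for every vertex. -/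
def Transient (F : G.E → ℝ) (β : ℝ) : Prop :=
  ∀ v : G.V, ∑' n : ℕ, G.Apow F β n v v ≠ ⊤

/-- `A(β)` is recurrent when `Σ_n A(β)ⁿ_{vv} = ∞` for some vertex. -/
def Recurrent (F : G.E → ℝ) (β : ℝ) : Prop :=
  ∃ v : G.V, ∑' n : ℕ, G.Apow F β n v v = ⊤

/-- An exit path: a sequence of vertices joined by edges which leaves every
finite set of vertices. -/
def IsExitPath (t : ℕ → G.V) : Prop :=
  (∀ i : ℕ, ∃ e : G.E, G.s e = t i ∧ G.r e = t (i + 1)) ∧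
  ∀ M : Set G.V, M.Finite → ∃ N : ℕ, ∀ i : ℕ, N ≤ i → t i ∉ M

/-- Tail equivalence of vertex sequences. -/
def TailEquiv (t t' : ℕ → G.V) : Prop :=
  ∃ k : ℤ, ∃ N : ℕ, ∀ i : ℕ, N ≤ i → 0 ≤ (i : ℤ) + k ∧ t ((i : ℤ) + k).toNat = t' i

/-- A simple loop based at `v`: a loop which returns to `v` only at the very end. -/
def IsSimpleLoop (v : G.V) (μ : List G.E) : Prop :=
  μ ≠ [] ∧ G.IsPathFrom μ v v ∧
  ∀ (i : ℕ) (h : i + 1 < μ.length), G.r (μ.get ⟨i, Nat.lt_of_succ_lt h⟩) ≠ v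

/-- `lⁿ_{vv}(β)`: the weighted number of simple loops of length `n` based at `v`. -/
noncomputable def loopSum (F : G.E → ℝ) (β : ℝ) (v : G.V) (n : ℕ) : ℝ≥0∞ :=
  ∑' μ : {μ : List G.E // μ.length = n ∧ G.IsSimpleLoop v μ},
    ENNReal.ofReal (Real.exp (-β * G.Fsum F μ.1))

/-- The space `P(G)` of infinite paths in `G`. -/
def PathSpace : Type := {p : ℕ → G.E // ∀ i : ℕ, G.r (p i) = G.s (p (i + 1))}

/-- The Borel σ-algebra of `P(G)` as a subspace of the product `E^ℕ` with `E`
discrete (for a countable discrete space, the Borel σ-algebra is the power set). -/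
instance : MeasurableSpace G.PathSpace :=
  letI : MeasurableSpace G.E := ⊤
  inferInstanceAs (MeasurableSpace {p : ℕ → G.E // ∀ i : ℕ, G.r (p i) = G.s (p (i + 1))})

/-- The cylinder set `Z'(v)` of infinite paths starting at the vertex `v`. -/
def cylV (v : G.V) : Set G.PathSpace := {p | G.s (p.1 0) = v}

/-- The cylinder set `Z'(μ)` of infinite paths beginning with the finite path `μ`. -/
def cylP (μ : List G.E) : Set G.PathSpace :=
  {p | ∀ (i : ℕ) (h : i < μ.length), p.1 i = μ.get ⟨i, h⟩}

/-- The set `P(G)_wan` of wandering infinite paths: those visiting each vertex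
only finitely many times. -/
def wanSet : Set G.PathSpace := {p | ∀ v : G.V, {i : ℕ | G.s (p.1 i) = v}.Finite}

end DirGraph


noncomputable def remS (D ε : ℝ) : ℕ → ℝ
  | 0 => ε
  | m + 1 => remS D ε m - (⌊remS D ε m / ((m + 2 : ℝ) * D ^ (m + 2))⌋₊ : ℝ) * D ^ (m + 2)

noncomputable def cS (D ε : ℝ) (m : ℕ) : ℕ := ⌊remS D ε m / ((m + 2 : ℝ) * D ^ (m + 2))⌋₊

lemma remS_succ (D ε : ℝ) (m : ℕ) :
    remS D ε (m + 1) = remS D ε m - (cS D ε m : ℝ) * D ^ (m + 2) := rfl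

lemma remS_lower (D ε : ℝ) (h0 : 0 < D) (hε : 0 < ε) (m : ℕ) :
    ε ≤ (m + 1 : ℝ) * remS D ε m := by
  induction m with
  | zero => simp [remS]
  | succ m ih =>
    have hr : 0 ≤ remS D ε m := by
      by_contra h
      push Not at h
      have : (m + 1 : ℝ) * remS D ε m < 0 := mul_neg_of_pos_of_neg (by positivity) h
      linarith
    have hp : 0 < (m + 2 : ℝ) * D ^ (m + 2) := by positivity
    have hc : (cS D ε m : ℝ) ≤ remS D ε m / ((m + 2 : ℝ) * D ^ (m + 2)) :=
      Nat.floor_le (by positivity)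
    rw [le_div_iff₀ hp] at hc
    rw [remS_succ]
    push_cast
    nlinarith

lemma remS_nonneg (D ε : ℝ) (h0 : 0 < D) (hε : 0 < ε) (m : ℕ) : 0 ≤ remS D ε m := by
  have := remS_lower D ε h0 hε m
  by_contra h
  push Not at h
  have : (m + 1 : ℝ) * remS D ε m < 0 := mul_neg_of_pos_of_neg (by positivity) h
  linarith

lemma cS_gt (D ε : ℝ) (h0 : 0 < D) (m : ℕ) :
    remS D ε m < ((cS D ε m : ℝ) + 1) * ((m + 2 : ℝ) * D ^ (m + 2)) := by
  have hp : 0 < (m + 2 : ℝ) * D ^ (m + 2) := by positivity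
  rw [← div_lt_iff₀ hp]
  exact Nat.lt_floor_add_one _

lemma remS_upper (D ε : ℝ) (h0 : 0 < D) (m : ℕ) :
    (m + 1 : ℝ) * remS D ε m ≤ ε + ∑ k ∈ Finset.range m, (k + 2 : ℝ) * D ^ (k + 2) := by
  induction m with
  | zero => simp [remS]
  | succ m ih =>
    have hc := cS_gt D ε h0 m
    rw [remS_succ, Finset.sum_range_succ]
    push_cast
    nlinarith

lemma remS_tendsto (D ε : ℝ) (h0 : 0 < D) (h1 : D < 1) (hε : 0 < ε) :
    Tendsto (remS D ε) atTop (nhds 0) := by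
  have hs : Summable (fun k : ℕ => (k + 2 : ℝ) * D ^ (k + 2)) := by
    have := summable_pow_mul_geometric_of_norm_lt_one 1 (r := D)
      (by rw [Real.norm_eq_abs, abs_of_pos h0]; exact h1)
    have := (summable_nat_add_iff 2).2 this
    simpa using this
  set S := ε + ∑' k : ℕ, (k + 2 : ℝ) * D ^ (k + 2)
  have hb : ∀ m : ℕ, remS D ε m ≤ S * (1 / ((m : ℝ) + 1)) := by
    intro m
    have h2 := hs.sum_le_tsum (Finset.range m) (fun k _ => by positivity)
    have h3 := remS_upper D ε h0 m
    rw [mul_one_div, le_div_iff₀ (by positivity)]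
    simp only [S]
    linarith
  refine squeeze_zero (remS_nonneg D ε h0 hε) hb ?_
  simpa using tendsto_one_div_add_atTop_nhds_zero_nat.const_mul S

lemma cS_hasSum (D ε : ℝ) (h0 : 0 < D) (h1 : D < 1) (hε : 0 < ε) :
    HasSum (fun m => (cS D ε m : ℝ) * D ^ (m + 2)) ε := by
  rw [hasSum_iff_tendsto_nat_of_nonneg (fun m => by positivity)]
  have h : ∀ n, ∑ i ∈ Finset.range n, (cS D ε i : ℝ) * D ^ (i + 2) = ε - remS D ε n := by
    intro n
    induction n with
    | zero => simp [remS]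
    | succ n ih => rw [Finset.sum_range_succ, ih, remS_succ]; ring
  simp only [h]
  simpa using (remS_tendsto D ε h0 h1 hε).const_sub ε

lemma cS_large (D ε x : ℝ) (h0 : 0 < D) (h1 : D < 1) (hε : 0 < ε) (hx : 0 ≤ x)
    (hxD : x * D < 1) (K : ℝ) :
    ∀ᶠ m : ℕ in atTop, x ^ (m + 2) + K ≤ cS D ε m := by
  have t1 := tendsto_pow_const_mul_const_pow_of_abs_lt_one 2 (r := x * D)
    (by rw [abs_of_nonneg (by positivity)]; exact hxD)
  have t2 := (tendsto_pow_const_mul_const_pow_of_abs_lt_one 2 (r := D)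
    (by rw [abs_of_pos h0]; exact h1)).const_mul (K + 1)
  have t := (t1.add t2).comp (tendsto_add_atTop_nat 2)
  have ev := t.eventually (gt_mem_nhds (show (0 : ℝ) + (K + 1) * 0 < ε by simpa using hε))
  filter_upwards [ev] with m hm
  simp only [Function.comp, mul_pow] at hm
  push_cast at hm
  have hl := remS_lower D ε h0 hε m
  have hc := cS_gt D ε h0 m
  have hp : 0 < (m + 2 : ℝ) ^ 2 * D ^ (m + 2) := by positivity
  have h3 : ε ≤ ((cS D ε m : ℝ) + 1) * ((m + 2 : ℝ) ^ 2 * D ^ (m + 2)) := by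
    have hr := remS_nonneg D ε h0 hε m
    calc ε ≤ (m + 1 : ℝ) * remS D ε m := hl
      _ ≤ (m + 2 : ℝ) * remS D ε m := by nlinarith
      _ ≤ (m + 2 : ℝ) * (((cS D ε m : ℝ) + 1) * ((m + 2 : ℝ) * D ^ (m + 2))) := by gcongr
      _ = _ := by ring
  have h4 : (x ^ (m + 2) + K + 1) * ((m + 2 : ℝ) ^ 2 * D ^ (m + 2))
      < ((cS D ε m : ℝ) + 1) * ((m + 2 : ℝ) ^ 2 * D ^ (m + 2)) := by
    refine lt_of_lt_of_le ?_ h3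
    calc _ = _ := by ring
      _ < ε := hm
  have := lt_of_mul_lt_mul_right h4 hp.le
  linarith

noncomputable def bS (D ε : ℝ) (a : ℕ → ℕ) : ℕ → ℕ
  | 0 => 0
  | 1 => 1
  | m + 2 => a (m + 2) + cS D ε m

/-- completion of a sequence of nonnegative integers to one with
`Σ bₙ Dⁿ = 1` and `limsup bₙ^{1/n} = D⁻¹`. -/
theorem stmt_17 (D : ℝ) (hD : D ∈ Set.Ioo (0 : ℝ) 1) (a : ℕ → ℕ)
    (ha : ∑' n : ℕ, (a (n + 2) : ℝ≥0∞) * ENNReal.ofReal D ^ (n + 2)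
      < ENNReal.ofReal (1 - D)) :
    ∃ b : ℕ → ℕ,
      b 1 = 1 ∧
      (∀ n : ℕ, 2 ≤ n → a n ≤ b n) ∧
      {n : ℕ | a n + 2 ≤ b n}.Infinite ∧
      Filter.limsup (fun n : ℕ => ((b n : ℝ≥0∞)) ^ ((n : ℝ)⁻¹)) Filter.atTop
        = ENNReal.ofReal D⁻¹ ∧
      ∑' n : ℕ, (b (n + 1) : ℝ≥0∞) * ENNReal.ofReal D ^ (n + 1) = 1 := by
  obtain ⟨h0, h1⟩ := hD
  set A := ∑' n : ℕ, (a (n + 2) : ℝ≥0∞) * ENNReal.ofReal D ^ (n + 2) with hA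
  have hAt : A ≠ ⊤ := ne_top_of_lt ha
  set ε : ℝ := 1 - D - A.toReal with hεd
  have hε : 0 < ε := by
    have := (ENNReal.lt_ofReal_iff_toReal_lt hAt).1 ha
    linarith
  have hsum : ∑' n : ℕ, (bS D ε a (n + 1) : ℝ≥0∞) * ENNReal.ofReal D ^ (n + 1) = 1 := by
    rw [tsum_eq_zero_add' ENNReal.summable]
    have hc : ∑' m : ℕ, (cS D ε m : ℝ≥0∞) * ENNReal.ofReal D ^ (m + 2) = ENNReal.ofReal ε := by
      have hs := cS_hasSum D ε h0 h1 hε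
      conv_rhs => rw [← hs.tsum_eq]
      rw [ENNReal.ofReal_tsum_of_nonneg (fun m => by positivity) hs.summable]
      refine tsum_congr fun m => ?_
      rw [ENNReal.ofReal_mul (by positivity), ENNReal.ofReal_pow h0.le, ENNReal.ofReal_natCast]
    have : ∀ n : ℕ, (bS D ε a (n + 1 + 1) : ℝ≥0∞) * ENNReal.ofReal D ^ (n + 1 + 1)
        = (a (n + 2) : ℝ≥0∞) * ENNReal.ofReal D ^ (n + 2)
          + (cS D ε n : ℝ≥0∞) * ENNReal.ofReal D ^ (n + 2) := by
      intro n
      simp only [bS]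
      push_cast
      ring
    simp only [this]
    rw [ENNReal.tsum_add, hc, ← hA, ← ENNReal.ofReal_toReal hAt,
      ← ENNReal.ofReal_add ENNReal.toReal_nonneg hε.le]
    simp only [bS, Nat.cast_one, one_mul, zero_add, pow_one]
    rw [← ENNReal.ofReal_add h0.le (by linarith [ENNReal.toReal_nonneg (a := A)])]
    rw [← ENNReal.ofReal_one]
    congr 1
    rw [hεd]; ring
  refine ⟨bS D ε a, rfl, ?_, ?_, ?_, hsum⟩
  · intro n hn
    obtain ⟨m, rfl⟩ := Nat.exists_eq_add_of_le' hn
    simp [bS]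
  · have h := cS_large D ε 0 h0 h1 hε le_rfl (by simp) 2
    have h' : ∀ᶠ n : ℕ in atTop, a n + 2 ≤ bS D ε a n := by
      rw [← Filter.map_add_atTop_eq_nat 2, Filter.eventually_map]
      filter_upwards [h] with m hm
      have : (2 : ℝ) ≤ cS D ε m := by simpa using hm
      have : 2 ≤ cS D ε m := by exact_mod_cast this
      simp only [bS]
      omega
    exact Nat.frequently_atTop_iff_infinite.1 h'.frequently
  · apply le_antisymm
    · refine limsup_le_of_le (by isBoundedDefault) ?_
      filter_upwards [eventually_ge_atTop 1] with n hn
      obtain ⟨m, rfl⟩ := Nat.exists_eq_add_of_le' hn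
      have h := ENNReal.le_tsum (f := fun n : ℕ =>
        (bS D ε a (n + 1) : ℝ≥0∞) * ENNReal.ofReal D ^ (n + 1)) m
      rw [hsum] at h
      have hD0 : ENNReal.ofReal D ≠ 0 := by simpa using h0
      have h2 : (bS D ε a (m + 1) : ℝ≥0∞) ≤ (ENNReal.ofReal D⁻¹) ^ (m + 1) := by
        rw [ENNReal.ofReal_inv_of_pos h0, ← ENNReal.inv_pow]
        exact ENNReal.le_inv_iff_mul_le.2 h
      calc _ ≤ ((ENNReal.ofReal D⁻¹) ^ (m + 1)) ^ (((m + 1 : ℕ) : ℝ)⁻¹) :=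
            ENNReal.rpow_le_rpow h2 (by positivity)
        _ = _ := ENNReal.pow_rpow_inv_natCast (by omega) _
    · refine le_of_forall_lt fun y hy => ?_
      obtain ⟨z, hyz, hz⟩ := exists_between hy
      refine hyz.trans_le ?_
      have hzt : z ≠ ⊤ := ne_top_of_lt hz
      have hz' := (ENNReal.lt_ofReal_iff_toReal_lt hzt).1 hz
      have hzD : z.toReal * D < 1 := by
        rwa [← lt_div_iff₀ h0, one_div]
      have h := cS_large D ε z.toReal h0 h1 hε ENNReal.toReal_nonneg hzD 0
      refine le_trans ?_ (liminf_le_limsup (by isBoundedDefault) (by isBoundedDefault))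
      refine le_liminf_of_le (by isBoundedDefault) ?_
      rw [← Filter.map_add_atTop_eq_nat 2, Filter.eventually_map]
      filter_upwards [h] with m hm
      rw [add_zero] at hm
      have h2 : z ^ (m + 2) ≤ (bS D ε a (m + 2) : ℝ≥0∞) := by
        have h3 : z ^ (m + 2) ≤ (cS D ε m : ℝ≥0∞) := by
          have := ENNReal.ofReal_le_ofReal hm
          rwa [ENNReal.ofReal_pow ENNReal.toReal_nonneg, ENNReal.ofReal_toReal hzt,
            ENNReal.ofReal_natCast] at this
        refine h3.trans ?_
        simp [bS]
      calc z = (z ^ (m + 2)) ^ (((m + 2 : ℕ) : ℝ)⁻¹) :=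
            (ENNReal.pow_rpow_inv_natCast (by omega) _).symm
        _ ≤ _ := ENNReal.rpow_le_rpow h2 (by positivity)
end

section
/- Every strongly connected row-finite countable directed graph with infinitely many vertices contains an exit path. -/
open scoped ENNReal NNReal Classical
open Filter MeasureTheory

theorem aux_reach (G : DirGraph) (w : G.V) (μ : List G.E) : ∀ u : G.V, G.IsPathFrom μ u w →
    Relation.ReflTransGen (fun a b => ∃ e : G.E, G.s e = a ∧ G.r e = b) u w := by
  induction μ with
  | nil =>
    intro u h
    rw [h.2.2.2 rfl]
  | cons e l ih =>
    intro u h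
    obtain ⟨h1, h2, h3, -⟩ := h
    have hs : G.s e = u := h2 e (by simp)
    refine Relation.ReflTransGen.head ⟨e, hs, rfl⟩ (ih _ ?_)
    cases l with
    | nil =>
      have : G.r e = w := h3 e (by simp)
      refine ⟨List.isChain_nil, by simp, by simp, fun _ => this⟩
    | cons f l =>
      have h1' := List.isChain_cons_cons.1 h1
      refine ⟨h1'.2, ?_, ?_, by simp⟩
      · intro g hg
        simp at hg
        subst hg
        exact h1'.1.symm
      · intro g hg
        apply h3 g
        rw [List.getLast?_cons_cons]
        exact hg

/-- `w` is the end of a walk of length `n` from `v`. -/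
def auxWalk (G : DirGraph) (v : G.V) : ℕ → G.V → Prop
  | 0, w => w = v
  | n + 1, w => ∃ u, auxWalk G v n u ∧ ∃ e : G.E, G.s e = u ∧ G.r e = w

theorem aux_walk (G : DirGraph) (v w : G.V)
    (h : Relation.ReflTransGen (fun a b => ∃ e : G.E, G.s e = a ∧ G.r e = b) v w) :
    ∃ n, auxWalk G v n w := by
  induction h with
  | refl => exact ⟨0, rfl⟩
  | tail _ hbc ih =>
    obtain ⟨n, hn⟩ := ih
    exact ⟨n + 1, _, hn, hbc⟩

/-- every strongly connected row-finite graph with infinitely many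
vertices contains an exit path. -/
theorem stmt_18 (G : DirGraph) (hSC : G.StronglyConnected) (hRF : G.RowFinite)
    (hInf : Infinite G.V) :
    ∃ t : ℕ → G.V, G.IsExitPath t := by
  obtain ⟨v⟩ : Nonempty G.V := inferInstance
  have hw : ∀ w, ∃ n, auxWalk G v n w := fun w => by
    obtain ⟨μ, hμ⟩ := hSC v w
    exact aux_walk G v w (aux_reach G w μ v hμ)
  let D : G.V → ℕ := fun w => Nat.find (hw w)
  have hD : ∀ w, auxWalk G v (D w) w := fun w => Nat.find_spec (hw w)
  have hDmin : ∀ w n, auxWalk G v n w → D w ≤ n := fun w n h => Nat.find_min' (hw w) h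
  let S : G.V → G.V → Prop := fun a b => (∃ e : G.E, G.s e = a ∧ G.r e = b) ∧ D b = D a + 1
  have hall : ∀ n w, D w = n → Relation.ReflTransGen S v w := by
    intro n
    induction n with
    | zero =>
      intro w h
      have := hD w
      rw [h] at this
      have h' : w = v := this
      rw [h']
    | succ n ih =>
      intro w h
      have h1 := hD w
      rw [h] at h1
      obtain ⟨u, hu, he⟩ := h1
      have h2 := hDmin u n hu
      have h3 := hDmin w (D u + 1) ⟨u, hD u, he⟩
      have h4 : D u = n := by omega
      exact (ih u h4).tail ⟨he, by omega⟩
  have hstep : ∀ a, {w | Relation.ReflTransGen S a w}.Infinite →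
      ∃ b, S a b ∧ {w | Relation.ReflTransGen S b w}.Infinite := by
    intro a ha
    by_contra hcon
    push Not at hcon
    apply ha
    have hfin : {b | S a b}.Finite := by
      apply ((hRF a).image G.r).subset
      rintro b ⟨⟨e, he, he'⟩, -⟩
      exact ⟨e, he, he'⟩
    have hU : (⋃ b ∈ {b | S a b}, {w | Relation.ReflTransGen S b w}).Finite :=
      hfin.biUnion (fun b hb => Set.not_infinite.1 (by simpa using hcon b hb))
    refine ((Set.finite_singleton a).union hU).subset ?_
    intro w hw'
    rcases Relation.ReflTransGen.cases_head hw' with h | ⟨c, hc, hcw⟩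
    · left
      exact h.symm
    · right
      exact Set.mem_biUnion (show c ∈ {b | S a b} from hc) hcw
  have h0 : {w | Relation.ReflTransGen S v w}.Infinite := by
    have : {w | Relation.ReflTransGen S v w} = Set.univ :=
      Set.eq_univ_of_forall (fun w => hall _ w rfl)
    rw [this]
    exact Set.infinite_univ
  choose f hf hf' using hstep
  let T : ℕ → {a : G.V // {w | Relation.ReflTransGen S a w}.Infinite} := fun n =>
    Nat.rec ⟨v, h0⟩ (fun _ a => ⟨f a.1 a.2, hf' a.1 a.2⟩) n
  have hT : ∀ n, S (T n).1 (T (n + 1)).1 := fun n => hf (T n).1 (T n).2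
  have hmono : ∀ n, n ≤ D (T n).1 := by
    intro n
    induction n with
    | zero => exact Nat.zero_le _
    | succ n ih =>
      have := (hT n).2
      omega
  refine ⟨fun n => (T n).1, fun i => (hT i).1, fun M hM => ?_⟩
  obtain ⟨B, hB⟩ := (hM.image D).bddAbove
  refine ⟨B + 1, fun i hi hm => ?_⟩
  have h1 : D (T i).1 ≤ B := hB ⟨_, hm, rfl⟩
  have h2 := hmono i
  omega
end

section
/- Let G be a strongly connected row-finite countable directed graph with infinitely many vertices such that the set of exits of G (tail-equivalence classes of exit paths) is at most countable. Then G contains a bare exit path. -/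
open scoped ENNReal NNReal Classical
open Filter MeasureTheory

namespace BareExit

open Relation

variable {V : Type} (A : V → V → Prop) (v₀ : V)

/-- Vertices reached by a walk of length exactly `n`. -/
def lev : ℕ → Set V
  | 0 => {v₀}
  | n + 1 => {w | ∃ u ∈ lev n, A u w}

theorem exists_dist (hfin : ∀ u, {w | A u w}.Finite) (hsc : ∀ u w, ReflTransGen A u w) :
    ∃ d : V → ℕ, d v₀ = 0 ∧ (∀ u v, A u v → d v ≤ d u + 1) ∧
      (∀ v n, d v = n + 1 → ∃ u, A u v ∧ d u = n) ∧ (∀ v, d v = 0 → v = v₀) ∧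
      ∀ n, {v | d v ≤ n}.Finite := by
  have hex : ∀ v, ∃ n, v ∈ lev A v₀ n := by
    intro v
    induction hsc v₀ v with
    | refl => exact ⟨0, rfl⟩
    | tail _ h ih =>
      obtain ⟨n, hn⟩ := ih
      exact ⟨n + 1, _, hn, h⟩
  have hle : ∀ u v, A u v → Nat.find (hex v) ≤ Nat.find (hex u) + 1 := fun u v h =>
    Nat.find_min' (hex v) (show v ∈ lev A v₀ (Nat.find (hex u) + 1) from ⟨u, Nat.find_spec (hex u), h⟩)
  have hlf : ∀ n, (lev A v₀ n).Finite := by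
    intro n
    induction n with
    | zero => exact Set.finite_singleton _
    | succ n ih =>
      refine (ih.biUnion (fun u _ => hfin u)).subset ?_
      rintro w ⟨u, hu, h⟩
      simp only [Set.mem_iUnion]
      exact ⟨u, hu, h⟩
  refine ⟨fun v => Nat.find (hex v), ?_, hle, ?_, ?_, ?_⟩
  · exact (Nat.find_eq_zero _).2 rfl
  · intro v n h
    have := Nat.find_spec (hex v)
    simp only at h
    rw [h] at this
    obtain ⟨u, hu, huv⟩ := this
    refine ⟨u, huv, ?_⟩
    have h1 := Nat.find_min' (hex u) hu
    have h2 := hle u v huv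
    simp only
    omega
  · intro v h
    have := Nat.find_spec (hex v)
    simp only at h
    rw [h] at this
    exact this
  · intro n
    refine ((Set.finite_Iic n).biUnion (fun i _ => hlf i)).subset ?_
    intro v hv
    simp only [Set.mem_iUnion]
    exact ⟨_, hv, Nat.find_spec (hex v)⟩

theorem walk_of_reach {r : V → V → Prop} {a b : V} (h : ReflTransGen r a b) (f : ℕ → V)
    (hf : f 0 = b) :
    ∃ (g : ℕ → V) (l : ℕ), g 0 = a ∧ (∀ i, g (l + i) = f i) ∧ ∀ i < l, r (g i) (g (i + 1)) := by
  induction h using ReflTransGen.head_induction_on with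
  | refl => exact ⟨f, 0, hf, by simp, by simp⟩
  | @head x c hac _ ih =>
    obtain ⟨g, l, h0, h1, h2⟩ := ih
    refine ⟨fun i => Nat.casesOn i x g, l + 1, rfl, ?_, ?_⟩
    · intro i
      have : l + 1 + i = (l + i) + 1 := by omega
      rw [this]
      exact h1 i
    · intro i hi
      cases i with
      | zero => simpa [h0] using hac
      | succ i => exact h2 i (by omega)

/-- Diagonal argument. -/
theorem diag (d : V → ℕ) (t : ℕ → V) (htA : ∀ i, A (t i) (t (i + 1))) (htd : ∀ i, d (t i) = i)
    (hg : ∀ k, ∃ (g : ℕ → V) (l j : ℕ), g 0 = t k ∧ (∀ i, A (g i) (g (i + 1))) ∧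
      (∀ i, g (l + i) = t (j + i)) ∧ (∃ i, g i ≠ t (k + i)) ∧ ∀ i, k ≤ d (g i))
    (s : ℕ → ℕ → V) :
    ∃ F : ℕ → V, (∀ i, A (F i) (F (i + 1))) ∧ (∀ n, ∃ N, ∀ i, N ≤ i → n ≤ d (F i)) ∧
      ∀ n, F ≠ s n := by
  let St := {p : (ℕ → V) × ℕ × ℕ // (∀ i, A (p.1 i) (p.1 (i + 1))) ∧
    ∀ i, p.1 (p.2.1 + i) = t (p.2.2 + i)}
  have step : ∀ (n : ℕ) (p : St), ∃ q : St, (∀ i ≤ p.1.2.1, q.1.1 i = p.1.1 i) ∧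
      p.1.2.1 < q.1.2.1 ∧ p.1.2.2 < q.1.2.2 ∧ (∀ i, p.1.2.1 ≤ i → p.1.2.2 ≤ d (q.1.1 i)) ∧
      ∃ i ≤ q.1.2.1, q.1.1 i ≠ s n i := by
    rintro n ⟨⟨f, m, k⟩, hfA, hft⟩
    simp only at hfA hft
    by_cases hfs : f = s n
    · obtain ⟨g, l, j, h0, h1, h2, ⟨i₀, h3⟩, h4⟩ := hg k
      have hm0 : f m = t k := by simpa using hft 0
      refine ⟨⟨⟨fun i => if i ≤ m then f i else g (i - m), m + l + (i₀ + k + 1),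
        j + (i₀ + k + 1)⟩, ?_, ?_⟩, ?_, ?_, ?_, ?_, ?_⟩
      · intro i
        rcases lt_trichotomy i m with h | h | h
        · simp only [h.le, if_true, Nat.succ_le_of_lt h]
          exact hfA i
        · subst h
          have e : i + 1 - i = 0 + 1 := by omega
          simp only [le_refl, if_true, show ¬ (i + 1 ≤ i) by omega, if_false, e]
          rw [hm0, ← h0]
          exact h1 0
        · have e : i + 1 - m = (i - m) + 1 := by omega
          simp only [show ¬ (i ≤ m) by omega, show ¬ (i + 1 ≤ m) by omega, if_false, e]
          exact h1 _
      · intro i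
        simp only
        rw [if_neg (by omega), show m + l + (i₀ + k + 1) + i - m = l + ((i₀ + k + 1) + i) by omega,
          h2, ← Nat.add_assoc]
      · intro i hi
        simp only at hi ⊢
        rw [if_pos hi]
      · simp only; omega
      · simp only; omega
      · intro i hi
        simp only at hi ⊢
        split_ifs with h
        · have : i = m := by omega
          subst this
          rw [hm0, htd]
        · exact h4 _
      · refine ⟨m + i₀, by simp only; omega, ?_⟩
        simp only
        rw [← hfs, hft]
        split_ifs with h
        · have : i₀ = 0 := by omega
          subst this
          exact absurd (by simpa using h0) h3
        · rw [Nat.add_sub_cancel_left]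
          exact h3
    · obtain ⟨i₀, hi₀⟩ := Function.ne_iff.1 hfs
      refine ⟨⟨⟨f, m + (i₀ + 1), k + (i₀ + 1)⟩, hfA, ?_⟩, ?_, ?_, ?_, ?_, ?_⟩
      · intro i
        simp only
        rw [Nat.add_assoc m, hft, Nat.add_assoc k]
      · intro i _; rfl
      · simp only; omega
      · simp only; omega
      · intro i hi
        simp only at hi ⊢
        obtain ⟨c, rfl⟩ := Nat.exists_eq_add_of_le hi
        rw [hft, htd]; omega
      · exact ⟨i₀, by simp only; omega, hi₀⟩
  choose nx n1 n2 n3 n4 n5 using step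
  let p0 : St := ⟨⟨t, 0, 0⟩, htA, fun i => rfl⟩
  let P : ℕ → St := fun n => Nat.rec p0 (fun n p => nx n p) n
  have hP : ∀ n, P (n + 1) = nx n (P n) := fun n => rfl
  have hm : ∀ n, n ≤ (P n).1.2.1 := by
    intro n
    induction n with
    | zero => exact Nat.zero_le _
    | succ n ih =>
      have := n2 n (P n)
      rw [hP]; omega
  have hk : ∀ n, n ≤ (P n).1.2.2 := by
    intro n
    induction n with
    | zero => exact Nat.zero_le _
    | succ n ih =>
      have := n3 n (P n)
      rw [hP]; omega
  have hmm : Monotone fun n => (P n).1.2.1 :=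
    monotone_nat_of_le_succ fun n => (n2 n (P n)).le
  have hkm : Monotone fun n => (P n).1.2.2 :=
    monotone_nat_of_le_succ fun n => (n3 n (P n)).le
  have hag : ∀ a b, a ≤ b → ∀ i ≤ (P a).1.2.1, (P b).1.1 i = (P a).1.1 i := by
    intro a b hab
    induction b, hab using Nat.le_induction with
    | base => intro i _; rfl
    | succ b hab ih =>
      intro i hi
      rw [hP, n1 b (P b) i (hi.trans (hmm hab)), ih i hi]
  have hd : ∀ a b, a ≤ b → ∀ i, (P a).1.2.1 ≤ i → (P a).1.2.2 ≤ d ((P b).1.1 i) := by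
    intro a b hab
    induction b, hab using Nat.le_induction with
    | base =>
      intro i hi
      obtain ⟨c, rfl⟩ := Nat.exists_eq_add_of_le hi
      rw [(P a).2.2, htd]; omega
    | succ b hab ih =>
      intro i hi
      rcases le_total (P b).1.2.1 i with h | h
      · exact (hkm hab).trans (n4 b (P b) i h)
      · rw [hP, n1 b (P b) i h]
        exact ih i hi
  let F : ℕ → V := fun i => (P i).1.1 i
  have hF : ∀ n i, i ≤ (P n).1.2.1 → F i = (P n).1.1 i := by
    intro n i hi
    rcases le_total n i with h | h
    · exact hag n i h i hi
    · exact (hag i n h i (hm i)).symm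
  refine ⟨F, ?_, ?_, ?_⟩
  · intro i
    rw [hF (i + 1) i (by have := hm (i + 1); omega)]
    exact (P (i + 1)).2.1 i
  · intro n
    refine ⟨(P n).1.2.1, fun i hi => ?_⟩
    have h1 : i ≤ (P (max n i)).1.2.1 := (le_max_right n i).trans (hm _)
    rw [hF _ i h1]
    exact (hk n).trans (hd n _ (le_max_left _ _) i hi)
  · intro n h
    obtain ⟨i, hi, hne⟩ := n5 n (P n)
    apply hne
    rw [← h, hF (n + 1) i hi]

/-- Partial geodesics. -/
def XX (d : V → ℕ) (R : ℕ) : Set (ℕ → V) :=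
  {t | (∀ i, d (t i) ≤ i) ∧ (∀ i ≤ R, d (t i) = i) ∧ ∀ i < R, A (t i) (t (i + 1))}

def QQ (d : V → ℕ) (t : ℕ → V) (R : ℕ) : Set (ℕ → V) :=
  {t' | t' ∈ XX A d R ∧ ∃ i u, R ≤ i ∧ u ≠ t i ∧ A u (t (i + 1)) ∧
    ReflTransGen (fun a b => A a b ∧ R ≤ d a) (t' R) u}

section top

variable (d : V → ℕ)

theorem isClosed_of_finite_dep [TopologicalSpace V] [DiscreteTopology V] (S : Set (ℕ → V)) (R : ℕ)
    (h : ∀ f g : ℕ → V, (∀ i ≤ R, f i = g i) → f ∈ S → g ∈ S) : IsClosed S := by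
  rw [← isOpen_compl_iff, isOpen_pi_iff]
  intro f hf
  refine ⟨Finset.range (R + 1), fun i => {f i}, fun i _ => ⟨isOpen_discrete _, rfl⟩, ?_⟩
  intro g hg hgS
  exact hf (h g f (fun i hi => hg i (by simp; omega)) hgS)

theorem compactK [TopologicalSpace V] [DiscreteTopology V] (hfin : ∀ n, {v | d v ≤ n}.Finite) :
    IsCompact {t : ℕ → V | ∀ i, d (t i) ≤ i} := by
  have := isCompact_univ_pi (X := fun _ : ℕ => V) (fun i => (hfin i).isCompact)
  convert this using 1
  ext t; simp

theorem compact_of_dep [TopologicalSpace V] [DiscreteTopology V]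
    (hfin : ∀ n, {v | d v ≤ n}.Finite) (S : Set (ℕ → V)) (R : ℕ)
    (h : ∀ f g : ℕ → V, (∀ i ≤ R, f i = g i) → f ∈ S → g ∈ S) :
    IsCompact ({t : ℕ → V | ∀ i, d (t i) ≤ i} ∩ S) :=
  (compactK d hfin).inter_right (isClosed_of_finite_dep S R h)

theorem compactXX [TopologicalSpace V] [DiscreteTopology V]
    (hfin : ∀ n, {v | d v ≤ n}.Finite) (R : ℕ) : IsCompact (XX A d R) := by
  refine compact_of_dep d hfin {t | (∀ i ≤ R, d (t i) = i) ∧ ∀ i < R, A (t i) (t (i + 1))} R ?_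
  rintro f g h ⟨h1, h2⟩
  refine ⟨fun i hi => ?_, fun i hi => ?_⟩
  · rw [← h i hi]; exact h1 i hi
  · rw [← h i hi.le, ← h (i + 1) hi]; exact h2 i hi

theorem compactQQ [TopologicalSpace V] [DiscreteTopology V]
    (hfin : ∀ n, {v | d v ≤ n}.Finite) (t : ℕ → V) (R : ℕ) : IsCompact (QQ A d t R) := by
  refine (compactXX A d hfin R).inter_right (isClosed_of_finite_dep {t' | ∃ i u, R ≤ i ∧ u ≠ t i ∧
    A u (t (i + 1)) ∧ ReflTransGen (fun a b => A a b ∧ R ≤ d a) (t' R) u} R ?_)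
  intro f g h h1
  simp only [Set.mem_ofPred_eq] at h1 ⊢
  rwa [← h R le_rfl]

theorem XX_anti (R : ℕ) : XX A d (R + 1) ⊆ XX A d R := fun _ h =>
  ⟨h.1, fun i hi => h.2.1 i (by omega), fun i hi => h.2.2 i (by omega)⟩

theorem QQ_anti (t : ℕ → V) (R : ℕ) : QQ A d t (R + 1) ⊆ QQ A d t R := by
  rintro t' ⟨h, i, u, h1, h2, h3, h4⟩
  refine ⟨XX_anti A d R h, i, u, by omega, h2, h3, ?_⟩
  refine ReflTransGen.head ⟨h.2.2 R (by omega), (h.2.1 R (by omega)).ge⟩ ?_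
  exact ReflTransGen.mono (fun a b hab => ⟨hab.1, by have := hab.2; omega⟩) _ _ h4

theorem geo (h0 : d v₀ = 0) (hpred : ∀ v n, d v = n + 1 → ∃ u, A u v ∧ d u = n) :
    ∀ m u, d u = m → ∃ g ∈ XX A d m, g m = u ∧ ∀ i, m < i → g i = v₀ := by
  intro m
  induction m with
  | zero =>
    intro u hu
    refine ⟨fun i => if i = 0 then u else v₀, ⟨?_, ?_, ?_⟩, ?_, ?_⟩
    · intro i; simp only; split_ifs <;> omega
    · intro i hi; simp only; split_ifs <;> omega
    · intro i hi; omega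
    · simp
    · intro i hi; simp only; rw [if_neg (by omega)]
  | succ m ih =>
    intro u hu
    obtain ⟨w, hw, hwd⟩ := hpred u m hu
    obtain ⟨g, hg, hgm, hg0⟩ := ih w hwd
    refine ⟨fun i => if i = m + 1 then u else g i, ⟨?_, ?_, ?_⟩, ?_, ?_⟩
    · intro i; simp only; split_ifs with h
      · omega
      · exact hg.1 i
    · intro i hi; simp only; split_ifs with h
      · omega
      · exact hg.2.1 i (by omega)
    · intro i hi
      simp only
      rw [if_neg (by omega)]
      split_ifs with h
      · have : i = m := by omega
        subst this
        rwa [hgm]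
      · exact hg.2.2 i (by omega)
    · simp
    · intro i hi; simp only; rw [if_neg (by omega)]; exact hg0 i (by omega)

theorem XX_le {R R' : ℕ} (h : R ≤ R') : XX A d R' ⊆ XX A d R :=
  antitone_nat_of_succ_le (f := XX A d) (XX_anti A d) h

theorem reach_of_XX (g : ℕ → V) (R m : ℕ) (hRm : R ≤ m) (hg : g ∈ XX A d m) :
    ReflTransGen (fun a b => A a b ∧ R ≤ d a) (g R) (g m) := by
  induction m, hRm using Nat.le_induction with
  | base => exact .refl
  | succ m hm ih =>
    refine (ih (XX_anti A d m hg)).tail ⟨hg.2.2 m (by omega), ?_⟩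
    rw [hg.2.1 m (by omega)]; exact hm

end top

theorem exists_self (hinf : Infinite V) (d : V → ℕ) (h0 : d v₀ = 0)
    (hle : ∀ u v, A u v → d v ≤ d u + 1)
    (hpred : ∀ v n, d v = n + 1 → ∃ u, A u v ∧ d u = n)
    (hfin : ∀ n, {v | d v ≤ n}.Finite)
    (hbare : ∀ t, (∀ R, t ∈ XX A d R) → ∀ R, ∃ i u, R ≤ i ∧ u ≠ t i ∧ A u (t (i + 1))) :
    ∃ t, ∀ R, t ∈ QQ A d t R := by
  let _ : TopologicalSpace V := ⊥
  have _ : DiscreteTopology V := ⟨rfl⟩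
  have hcX := compactXX A d hfin
  have hcQ := compactQQ A d hfin
  have hXne : ∀ R, (XX A d R).Nonempty := by
    intro R
    obtain ⟨u, hu⟩ := (hfin R).exists_notMem
    simp only [Set.mem_ofPred_eq, not_le] at hu
    obtain ⟨g, hg, -⟩ := geo A v₀ d h0 hpred _ u rfl
    exact ⟨g, XX_le A d hu.le hg⟩
  have hX : (⋂ R, XX A d R).Nonempty :=
    IsCompact.nonempty_iInter_of_sequence_nonempty_isCompact_isClosed _ (XX_anti A d) hXne (hcX 0)
      fun R => (hcX R).isClosed
  have hXc : IsCompact (⋂ R, XX A d R) :=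
    (hcX 0).of_isClosed_subset (isClosed_iInter fun R => (hcX R).isClosed) (Set.iInter_subset _ 0)
  let P : (ℕ → V) → Set (ℕ → V) := fun t => ⋂ R, QQ A d t R
  have hPX : ∀ t, P t ⊆ ⋂ R, XX A d R := fun t => Set.iInter_mono fun R x hx => hx.1
  have hPc : ∀ t, IsClosed (P t) := fun t => isClosed_iInter fun R => (hcQ t R).isClosed
  have hPne : ∀ t ∈ ⋂ R, XX A d R, (P t).Nonempty := by
    intro t ht
    rw [Set.mem_iInter] at ht
    refine IsCompact.nonempty_iInter_of_sequence_nonempty_isCompact_isClosed _ (QQ_anti A d t) ?_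
      (hcQ t 0) fun R => (hcQ t R).isClosed
    intro R
    obtain ⟨i, u, hi, hu, hA⟩ := hbare t ht R
    have h1 := hle _ _ hA
    rw [(ht (i + 1)).2.1 (i + 1) le_rfl] at h1
    obtain ⟨g, hg, hgu, -⟩ := geo A v₀ d h0 hpred _ u rfl
    refine ⟨g, XX_le A d (by omega) hg, i, u, hi, hu, hA, ?_⟩
    have := reach_of_XX A d g R (d u) (by omega) hg
    rwa [hgu] at this
  have hPtr : ∀ t t', t' ∈ P t → P t' ⊆ P t := by
    intro t t' h t'' h''
    simp only [P, Set.mem_iInter] at h h'' ⊢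
    intro R
    obtain ⟨hx, i, u, hi, hu, hA, hr⟩ := h'' R
    obtain ⟨hx', j, w, hj, hw, hA', hr'⟩ := h (i + 1)
    refine ⟨hx, j, w, by omega, hw, hA', ?_⟩
    have h1 := hle _ _ hA
    rw [hx'.2.1 (i + 1) le_rfl] at h1
    exact (hr.tail ⟨hA, by omega⟩).trans (ReflTransGen.mono (fun a b hab => ⟨hab.1, by have := hab.2; omega⟩) _ _ hr')
  let Fam : Set (Set (ℕ → V)) :=
    {C | IsClosed C ∧ C.Nonempty ∧ C ⊆ (⋂ R, XX A d R) ∧ ∀ x ∈ C, P x ⊆ C}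
  have hmem : (⋂ R, XX A d R) ∈ Fam := ⟨hXc.isClosed, hX, subset_rfl, fun x _ => hPX x⟩
  obtain ⟨C, -, hC⟩ := zorn_superset_nonempty Fam (by
    intro c hc hchain hne
    refine ⟨⋂₀ c, ⟨isClosed_sInter fun s hs => (hc hs).1, ?_, ?_, ?_⟩,
      fun s hs => Set.sInter_subset_of_mem hs⟩
    · have : Nonempty c := hne.to_subtype
      refine IsCompact.nonempty_sInter_of_directed_nonempty_isCompact_isClosed ?_
        (fun s hs => (hc hs).2.1) (fun s hs => hXc.of_isClosed_subset (hc hs).1 (hc hs).2.2.1)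
        (fun s hs => (hc hs).1)
      intro x hx y hy
      rcases hchain.total hx hy with h | h
      · exact ⟨x, hx, subset_rfl, h⟩
      · exact ⟨y, hy, h, subset_rfl⟩
    · obtain ⟨s, hs⟩ := hne
      exact (Set.sInter_subset_of_mem hs).trans (hc hs).2.2.1
    · intro x hx
      exact Set.subset_sInter fun s hs => (hc hs).2.2.2 x (hx s hs)) _ hmem
  obtain ⟨x, hx⟩ := hC.prop.2.1
  have hPx : P x ∈ Fam := ⟨hPc x, hPne x (hC.prop.2.2.1 hx), hPX x, fun y hy => hPtr x y hy⟩
  have := hC.le_of_le hPx (hC.prop.2.2.2 x hx) hx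
  exact ⟨x, fun R => Set.mem_iInter.1 this R⟩

theorem main (hfinA : ∀ u, {w | A u w}.Finite) (hsc : ∀ u w, ReflTransGen A u w)
    (hinf : Infinite V)
    (hbare : ∀ t : ℕ → V, (∀ i, A (t i) (t (i + 1))) →
      (∀ M : Set V, M.Finite → ∃ N : ℕ, ∀ i : ℕ, N ≤ i → t i ∉ M) →
      ∃ i u, u ≠ t i ∧ A u (t (i + 1))) (s : ℕ → ℕ → V) :
    ∃ F : ℕ → V, (∀ i, A (F i) (F (i + 1))) ∧
      (∀ M : Set V, M.Finite → ∃ N : ℕ, ∀ i : ℕ, N ≤ i → F i ∉ M) ∧ ∀ n, F ≠ s n := by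
  obtain ⟨v₀⟩ : Nonempty V := inferInstance
  obtain ⟨d, h0, hle, hpred, -, hfin⟩ := exists_dist A v₀ hfinA hsc
  have hexit : ∀ F : ℕ → V, (∀ n, ∃ N, ∀ i, N ≤ i → n ≤ d (F i)) →
      ∀ M : Set V, M.Finite → ∃ N : ℕ, ∀ i : ℕ, N ≤ i → F i ∉ M := by
    intro F hF M hM
    obtain ⟨b, hb⟩ := (hM.image d).bddAbove
    obtain ⟨N, hN⟩ := hF (b + 1)
    refine ⟨N, fun i hi hiM => ?_⟩
    have h1 := hb (Set.mem_image_of_mem d hiM)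
    have h2 := hN i hi
    omega
  obtain ⟨t, ht⟩ := exists_self A v₀ hinf d h0 hle hpred hfin (by
    intro t ht R
    obtain ⟨i, u, hu, hA⟩ := hbare (fun i => t (R + i)) (fun i => (ht (R + i + 1)).2.2 _ (by omega))
      (hexit _ fun n => ⟨n, fun i hi => by
        rw [(ht (R + i)).2.1 _ le_rfl]; omega⟩)
    exact ⟨R + i, u, by omega, hu, hA⟩)
  have htA : ∀ i, A (t i) (t (i + 1)) := fun i => (ht (i + 1)).1.2.2 i (by omega)
  have htd : ∀ i, d (t i) = i := fun i => (ht i).1.2.1 i le_rfl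
  obtain ⟨F, hF1, hF2, hF3⟩ := diag A d t htA htd (by
    intro k
    obtain ⟨-, i, u, hi, hu, hA, hr⟩ := ht k
    obtain ⟨g, l, g0, gl, gr⟩ := walk_of_reach hr
      (fun n => Nat.casesOn n u fun n => t (i + 1 + n)) rfl
    have hgl : ∀ n, g (l + 1 + n) = t (i + 1 + n) := by
      intro n
      rw [show l + 1 + n = l + (n + 1) by omega, gl]
    have hglu : g l = u := gl 0
    have hdu := hle _ _ hA
    rw [htd] at hdu
    refine ⟨g, l + 1, i + 1, g0, ?_, hgl, ?_, ?_⟩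
    · intro n
      rcases lt_trichotomy n l with h | h | h
      · exact (gr n h).1
      · subst h
        have := hgl 0
        simp only [Nat.add_zero] at this
        rw [this, hglu]; exact hA
      · obtain ⟨c, rfl⟩ := Nat.exists_eq_add_of_le (Nat.succ_le_of_lt h)
        have h1 := hgl c
        have h2 := hgl (c + 1)
        rw [← Nat.add_assoc] at h2
        simp only [Nat.succ_eq_add_one]
        rw [h1, h2]; exact htA _
    · by_contra! hcon
      have h1 := hgl 0
      rw [hcon] at h1
      have h2 := congrArg d h1
      rw [htd, htd] at h2
      apply hu
      rw [← hglu, hcon]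
      congr 1; omega
    · intro n
      rcases lt_trichotomy n l with h | h | h
      · exact (gr n h).2
      · subst h; rw [hglu]; omega
      · obtain ⟨c, rfl⟩ := Nat.exists_eq_add_of_le (Nat.succ_le_of_lt h)
        simp only [Nat.succ_eq_add_one]
        rw [hgl, htd]; omega) s
  exact ⟨F, hF1, hexit F hF2, hF3⟩

theorem reach_of_path (G : DirGraph) (μ : List G.E) : ∀ u w, G.IsPathFrom μ u w →
    ReflTransGen (fun u w => ∃ e, G.s e = u ∧ G.r e = w) u w := by
  induction μ with
  | nil =>
    intro u w h
    rw [h.2.2.2 rfl]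
  | cons e μ ih =>
    rintro u w ⟨h1, h2, h3, -⟩
    refine ReflTransGen.head ⟨e, h2 e (by simp), rfl⟩ (ih (G.r e) w ⟨?_, ?_, ?_, ?_⟩)
    · exact List.IsChain.tail h1
    · intro f hf
      cases μ with
      | nil => simp at hf
      | cons f' μ =>
        simp at hf
        subst hf
        have := List.isChain_cons_cons.1 h1
        exact this.1.symm
    · intro f hf
      apply h3
      cases μ with
      | nil => simp at hf
      | cons f' μ => simpa [List.getLast?_cons_cons] using hf
    · rintro rfl
      exact h3 e (by simp)

theorem tail_countable (G : DirGraph) (t' : ℕ → G.V) : {t | G.TailEquiv t' t}.Countable := by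
  have : {t | G.TailEquiv t' t} ⊆ ⋃ k : ℤ, ⋃ N : ℕ, Set.range (fun (p : Fin N → G.V) (i : ℕ) =>
      if h : i < N then p ⟨i, h⟩ else t' ((i : ℤ) + k).toNat) := by
    rintro t ⟨k, N, h⟩
    simp only [Set.mem_iUnion]
    refine ⟨k, N, fun i => t i, ?_⟩
    funext i
    by_cases hi : i < N
    · simp [hi]
    · simp only [hi, dite_false]
      exact (h i (by omega)).2
  exact (Set.countable_iUnion fun k => Set.countable_iUnion fun N => Set.countable_range _).mono this

end BareExit

/-- a strongly connected row-finite graph with infinitely many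
vertices and at most countably many exits contains a bare exit path. -/
theorem stmt_19 (G : DirGraph) (hSC : G.StronglyConnected) (hRF : G.RowFinite)
    (hInf : Infinite G.V)
    (hcount : ∃ T : Set (ℕ → G.V), T.Countable ∧
      ∀ t : ℕ → G.V, G.IsExitPath t → ∃ t' ∈ T, G.TailEquiv t' t) :
    ∃ t : ℕ → G.V, G.IsExitPath t ∧
      ∀ i : ℕ, ∃! u : G.V, ∃ e : G.E, G.r e = t (i + 1) ∧ G.s e = u := by
  by_contra hno
  obtain ⟨T, hT, hTt⟩ := hcount
  have hS : {t | G.IsExitPath t}.Countable := by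
    refine (hT.biUnion fun t' _ => BareExit.tail_countable G t').mono ?_
    intro t ht
    obtain ⟨t', h1, h2⟩ := hTt t ht
    simp only [Set.mem_iUnion]
    exact ⟨t', h1, h2⟩
  obtain ⟨s, hs⟩ := Set.countable_iff_exists_subset_range.1 hS
  obtain ⟨F, h1, h2, h3⟩ := BareExit.main (fun u w : G.V => ∃ e : G.E, G.s e = u ∧ G.r e = w) (by
      intro u
      refine ((hRF u).image G.r).subset ?_
      rintro w ⟨e, he, rfl⟩
      exact ⟨e, he, rfl⟩) (by
      intro u w
      obtain ⟨μ, hμ⟩ := hSC u w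
      exact BareExit.reach_of_path G μ u w hμ) hInf (by
      intro t ht1 ht2
      by_contra hcon
      refine hno ⟨t, ⟨ht1, ht2⟩, fun i => ⟨t i, ?_, ?_⟩⟩
      · obtain ⟨e, he1, he2⟩ := ht1 i
        exact ⟨e, he2, he1⟩
      · rintro u ⟨e, he1, he2⟩
        by_contra hne
        exact hcon ⟨i, u, hne, e, he2, he1⟩) s
  obtain ⟨n, hn⟩ := hs (show F ∈ {t | G.IsExitPath t} from ⟨h1, h2⟩)
  exact h3 n hn.symm
end
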